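/- Periodic minimum problem, intermediate-size domains, intermediate volume fraction: let τ ∈ [0,1], write τ_* = min{τ,1−τ} and τ^* = max{τ,1−τ}, and assume τ_* ≤ L ≤ τ^* and (L+τ_*)²/(4L) ≤ σ ≤ 1 − (L+τ_*)²/(4L). Then 2L + 2τ_* is the least element of the set of values E^{#}_τ(v) as v ranges over Adm(L,σ): every v ∈ Adm(L,σ) satisfies E^{#}_τ(v) ≥ 2L + 2τ_*, and the constant function v ≡ σ attains this value. -/

import Mathlib

open MeasureTheory Filter Set

noncomputable section

/-- `Adm L σ v` : `v` is admissible, i.e. `0 ≤ v ≤ 1` on `(0,L)`, `v` has finite pointwise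
total variation on `(0,L)` and `∫_{(0,L)} v = σL`. -/
def Adm (L σ : ℝ) (v : ℝ → ℝ) : Prop :=
  (∀ x ∈ Set.Ioo 0 L, 0 ≤ v x ∧ v x ≤ 1) ∧
  BoundedVariationOn v (Set.Ioo 0 L) ∧
  (∫ x in Set.Ioo 0 L, v x) = σ * L

/-- The interior part of the limit functional:
`2·λ({x ∈ (0,L) : 0 < v(x) < 1}) + Var(v;(0,L))`. -/
def Fvol (L : ℝ) (v : ℝ → ℝ) : ℝ :=
  2 * (volume {x ∈ Set.Ioo 0 L | 0 < v x ∧ v x < 1}).toReal +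
    (eVariationOn v (Set.Ioo 0 L)).toReal

/-- The boundary term `φ_τ(x,y) = λ( [0,1] ∩ ( ([−τ,x−τ] ∪ [1−τ,x+1−τ]) Δ [0,y] ) )`. -/
def phi (τ x y : ℝ) : ℝ :=
  (volume (Set.Icc (0 : ℝ) 1 ∩
    symmDiff (Set.Icc (-τ) (x - τ) ∪ Set.Icc (1 - τ) (x + 1 - τ)) (Set.Icc 0 y))).toReal

/-!
`phi τ x y` is the measure of the symmetric difference of an arc of length `x` and an arc of
length `y` on the unit circle. The triangle inequality for symmetric differences makes it
`1`-Lipschitz in `x` and in `y`, so moving the boundary values `a`, `b` to two interior values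
`v x`, `v y` costs no more than the variation of `v` outside `[x, y]`. Hence
`Var v + phi τ a b ≥ |v x - v y| + phi τ (v x) (v y)`, which is at least `2 * |v x - v y|`, and at
least `phi τ s s` for every `s` between `v x` and `v y`.

If `v` never takes the values `0` and `1`, its transition set is all of `(0, L)`, and `v` takes
values on both sides of its mean `σ`, where `phi τ σ σ = 2 * min τ (1 - τ)`. If `v` takes both
values, then `Var v + phi τ a b ≥ 2 ≥ 2 * L + 2 * min τ (1 - τ)`. If it takes the value `0` but not
`1`, then `v` is supported in its transition set, of measure `m`, so that `v y * m ≥ σ * L` at some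
point `y`, and AM-GM gives `2 * m + 2 * v y ≥ 4 * √(σ * L) ≥ 2 * (L + min τ (1 - τ))`. The remaining
case is symmetric under `v ↦ 1 - v`.
-/

section Variation

open scoped Topology

variable {α : Type*} [LinearOrder α]

lemma edist_add_edist_add_edist_le_eVariationOn {E : Type*} [PseudoEMetricSpace E] (f : α → E)
    {s : Set α} {p x y q : α} (hp : p ∈ s) (hx : x ∈ s) (hy : y ∈ s) (hq : q ∈ s)
    (hpx : p ≤ x) (hxy : x ≤ y) (hyq : y ≤ q) :
    edist (f p) (f x) + edist (f x) (f y) + edist (f y) (f q) ≤ eVariationOn f s := by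
  have edist_le {c d : α} (hc : c ∈ s) (hd : d ∈ s) (hcd : c ≤ d) :
      edist (f c) (f d) ≤ eVariationOn f (s ∩ Icc c d) :=
    eVariationOn.edist_le f ⟨hc, left_mem_Icc.2 hcd⟩ ⟨hd, right_mem_Icc.2 hcd⟩
  calc edist (f p) (f x) + edist (f x) (f y) + edist (f y) (f q)
      ≤ eVariationOn f (s ∩ Icc p x) + eVariationOn f (s ∩ Icc x y)
          + eVariationOn f (s ∩ Icc y q) :=
        add_le_add (add_le_add (edist_le hp hx hpx) (edist_le hx hy hxy)) (edist_le hy hq hyq)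
    _ = eVariationOn f (s ∩ Icc p q) := by
        rw [eVariationOn.Icc_add_Icc f hpx hxy hx,
          eVariationOn.Icc_add_Icc f (hpx.trans hxy) hyq hy]
    _ ≤ eVariationOn f s := eVariationOn.mono f inter_subset_left

lemma edist_add_edist_add_edist_le_eVariationOn_of_tendsto {E : Type*} [PseudoEMetricSpace E]
    {f : α → E} {s : Set α} {x y : α} {l₁ l₂ : Filter α} [l₁.NeBot] [l₂.NeBot] {A B : E}
    (hA : Tendsto f l₁ (𝓝 A)) (hB : Tendsto f l₂ (𝓝 B)) (hx : x ∈ s) (hy : y ∈ s) (hxy : x ≤ y)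
    (hl₁ : ∀ᶠ p in l₁, p ∈ s ∧ p ≤ x) (hl₂ : ∀ᶠ q in l₂, q ∈ s ∧ y ≤ q) :
    edist A (f x) + edist (f x) (f y) + edist (f y) B ≤ eVariationOn f s := by
  have hlim : Tendsto (fun z : α × α ↦
      edist (f z.1) (f x) + edist (f x) (f y) + edist (f y) (f z.2)) (l₁ ×ˢ l₂)
      (𝓝 (edist A (f x) + edist (f x) (f y) + edist (f y) B)) :=
    (((hA.comp tendsto_fst).edist tendsto_const_nhds).add tendsto_const_nhds).add
      (tendsto_const_nhds.edist (hB.comp tendsto_snd))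
  refine le_of_tendsto hlim ((hl₁.prod_mk hl₂).mono fun z hz ↦ ?_)
  exact edist_add_edist_add_edist_le_eVariationOn f hz.1.1 hx hy hz.2.1 hz.1.2 hxy hz.2.2

lemma dist_add_dist_add_dist_le_eVariationOn_Ioo [TopologicalSpace α] [OrderTopology α]
    [DenselyOrdered α] {E : Type*} [PseudoMetricSpace E] {f : α → E} {c d : α} {A B : E}
    (hf : BoundedVariationOn f (Ioo c d)) (hA : Tendsto f (𝓝[Ioo c d] c) (𝓝 A))
    (hB : Tendsto f (𝓝[Ioo c d] d) (𝓝 B)) {x y : α} (hx : x ∈ Ioo c d) (hy : y ∈ Ioo c d)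
    (hxy : x ≤ y) :
    dist A (f x) + dist (f x) (f y) + dist (f y) B ≤ (eVariationOn f (Ioo c d)).toReal := by
  have hcd : c < d := hx.1.trans hx.2
  have := left_nhdsWithin_Ioo_neBot hcd
  have := right_nhdsWithin_Ioo_neBot hcd
  have h := edist_add_edist_add_edist_le_eVariationOn_of_tendsto hA hB hx hy hxy
    (eventually_mem_nhdsWithin.and (nhdsWithin_le_nhds (Iic_mem_nhds hx.1)))
    (eventually_mem_nhdsWithin.and (nhdsWithin_le_nhds (Ici_mem_nhds hy.2)))
  simp only [edist_dist] at h
  rwa [← ENNReal.ofReal_add (by positivity) (by positivity),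
    ← ENNReal.ofReal_add (by positivity) (by positivity), ENNReal.ofReal_le_iff_le_toReal hf] at h

lemma eVariationOn_const {E : Type*} [PseudoEMetricSpace E] (c : E) (s : Set α) :
    eVariationOn (fun _ ↦ c) s = 0 :=
  eVariationOn.constant_on
    (subsingleton_singleton.anti (image_subset_iff.2 fun _ _ ↦ mem_singleton c))

lemma aemeasurable_restrict_of_locallyBoundedVariationOn [TopologicalSpace α] [OrderTopology α]
    [SecondCountableTopology α] [MeasurableSpace α] [BorelSpace α] {μ : Measure α} {f : α → ℝ}
    {s : Set α} (hs : MeasurableSet s) (hf : LocallyBoundedVariationOn f s) :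
    AEMeasurable f (μ.restrict s) := by
  obtain ⟨p, q, hp, hq, rfl⟩ := hf.exists_monotoneOn_sub_monotoneOn
  exact (aemeasurable_restrict_of_monotoneOn hs hp).sub (aemeasurable_restrict_of_monotoneOn hs hq)

end Variation

section Measure

open scoped symmDiff

variable {α : Type*} [MeasurableSpace α] {μ : Measure α}

lemma measureReal_symmDiff_eq_sub {s t : Set α} (hs : MeasurableSet s) (ht : MeasurableSet t)
    (hμs : μ s ≠ ⊤) (hμt : μ t ≠ ⊤) :
    μ.real (s ∆ t) = μ.real s + μ.real t - 2 * μ.real (s ∩ t) := by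
  have hst := measureReal_inter_add_sdiff (s := s) ht hμs
  have hts := measureReal_inter_add_sdiff (s := t) hs hμt
  rw [inter_comm] at hts
  rw [measureReal_symmDiff_eq hs ht hμs hμt]
  linarith

lemma measureReal_symmDiff_of_monotone {ι : Type*} [LinearOrder ι] {S : ι → Set α}
    (hS : Monotone S) (hSm : ∀ i, MeasurableSet (S i)) (hSμ : ∀ i, μ (S i) ≠ ⊤) (i j : ι) :
    μ.real (S i ∆ S j) = |μ.real (S i) - μ.real (S j)| := by
  wlog hij : i ≤ j generalizing i j
  · rw [symmDiff_comm, abs_sub_comm, this j i (le_of_not_ge hij)]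
  rw [measureReal_symmDiff_eq_sub (hSm i) (hSm j) (hSμ i) (hSμ j), inter_eq_left.2 (hS hij),
    abs_of_nonpos (sub_nonpos.2 (measureReal_mono (hS hij) (hSμ j)))]
  ring

lemma exists_le_measureReal_add_of_sq_le_setIntegral {s : Set α} {f : α → ℝ} {c : ℝ}
    (hs : μ s ≠ ⊤) (hc : 0 < c) (h : c ^ 2 ≤ 4 * ∫ x in s, f x ∂μ) :
    ∃ x ∈ s, c ≤ μ.real s + f x := by
  have hint : 0 < ∫ x in s, f x ∂μ := by nlinarith
  have hs0 : μ s ≠ 0 := fun h0 ↦ hint.ne' (setIntegral_measure_zero f h0)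
  have hpos : 0 < μ.real s := ENNReal.toReal_pos hs0 hs
  obtain ⟨x, hx, hfx⟩ := exists_setAverage_le hs0 hs (Integrable.of_integral_ne_zero hint.ne')
  rw [setAverage_eq, smul_eq_mul, inv_mul_le_iff₀ hpos] at hfx
  have hfx0 : 0 < f x := pos_of_mul_pos_right (hint.trans_le hfx) hpos.le
  refine ⟨x, hx, le_of_sq_le_sq ?_ (by positivity)⟩
  calc c ^ 2 ≤ 4 * μ.real s * f x := by linarith
    _ ≤ (μ.real s + f x) ^ 2 := four_mul_le_sq_add _ _

end Measure

section BoundaryTerm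

open scoped symmDiff

/-- The arc of length `x` starting at `-τ` on the circle `ℝ/ℤ`, as a subset of the fundamental
domain `[0, 1]`. It is the first set of the symmetric difference in `phi`. -/
def arc (τ x : ℝ) : Set ℝ :=
  Icc 0 1 ∩ (Icc (-τ) (x - τ) ∪ Icc (1 - τ) (x + 1 - τ))

lemma measurableSet_arc (τ x : ℝ) : MeasurableSet (arc τ x) :=
  measurableSet_Icc.inter (measurableSet_Icc.union measurableSet_Icc)

lemma arc_subset_Icc (τ x : ℝ) : arc τ x ⊆ Icc 0 1 :=
  inter_subset_left

lemma volume_arc_ne_top (τ x : ℝ) : volume (arc τ x) ≠ ⊤ :=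
  measure_ne_top_of_subset (arc_subset_Icc τ x) measure_Icc_lt_top.ne

lemma monotone_arc (τ : ℝ) : Monotone (arc τ) := fun x y hxy ↦ by
  unfold arc
  gcongr

variable {τ : ℝ}

lemma volume_real_arc_inter_Icc (hτ : τ ∈ Icc 0 1) {x q : ℝ} (hx : x ≤ 1) (hq : q ≤ 1) :
    volume.real (arc τ x ∩ Icc 0 q) =
      max (min (x - τ) q) 0 + max (min (x + 1 - τ) q - (1 - τ)) 0 := by
  have hdisj : AEDisjoint volume (Icc 0 (min (x - τ) q)) (Icc (1 - τ) (min (x + 1 - τ) q)) := by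
    refine measure_mono_null (t := {1 - τ}) (fun z hz ↦ ?_) Real.volume_singleton
    exact le_antisymm ((hz.1.2.trans (min_le_left _ _)).trans (by linarith)) hz.2.1
  have hpieces : arc τ x ∩ Icc 0 q =
      Icc 0 (min (x - τ) q) ∪ Icc (1 - τ) (min (x + 1 - τ) q) := by
    ext z
    simp only [arc, mem_inter_iff, mem_union, mem_Icc, le_min_iff] at hτ ⊢
    grind
  rw [hpieces, measureReal_union₀ measurableSet_Icc.nullMeasurableSet hdisj
      measure_Icc_lt_top.ne measure_Icc_lt_top.ne,
    Real.volume_real_Icc, Real.volume_real_Icc, sub_zero]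

lemma volume_real_arc (hτ : τ ∈ Icc 0 1) {x : ℝ} (hx : x ∈ Icc 0 1) :
    volume.real (arc τ x) = x := by
  have h := volume_real_arc_inter_Icc hτ hx.2 le_rfl
  rw [inter_eq_left.2 (arc_subset_Icc τ x)] at h
  rw [h]
  grind

lemma phi_eq_volume_real_symmDiff_arc {y : ℝ} (hy : y ≤ 1) (x : ℝ) :
    phi τ x y = volume.real (arc τ x ∆ Icc 0 y) := by
  rw [phi, inter_symmDiff_distrib_left, inter_eq_right.2 (Icc_subset_Icc_right hy)]
  rfl

lemma phi_le_phi_add (hτ : τ ∈ Icc 0 1) {a b c d : ℝ} (ha : a ∈ Icc 0 1) (hb : b ∈ Icc 0 1)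
    (hc : c ∈ Icc 0 1) (hd : d ∈ Icc 0 1) :
    phi τ c d ≤ phi τ a b + |c - a| + |b - d| := by
  have hIcc : Monotone (Icc (0 : ℝ)) := fun _ _ h ↦ Icc_subset_Icc_right h
  have harc_symmDiff : volume.real (arc τ c ∆ arc τ a) = |c - a| := by
    rw [measureReal_symmDiff_of_monotone (monotone_arc τ) (measurableSet_arc τ)
      (volume_arc_ne_top τ), volume_real_arc hτ hc, volume_real_arc hτ ha]
  have hIcc_symmDiff : volume.real (Icc 0 b ∆ Icc 0 d) = |b - d| := by
    rw [measureReal_symmDiff_of_monotone hIcc (fun _ ↦ measurableSet_Icc)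
      (fun _ ↦ measure_Icc_lt_top.ne), Real.volume_real_Icc_of_le hb.1,
      Real.volume_real_Icc_of_le hd.1, sub_zero, sub_zero]
  rw [phi_eq_volume_real_symmDiff_arc hd.2, phi_eq_volume_real_symmDiff_arc hb.2]
  calc volume.real (arc τ c ∆ Icc 0 d)
      ≤ volume.real (arc τ c ∆ arc τ a) + volume.real (arc τ a ∆ Icc 0 d) :=
        measureReal_symmDiff_le _ (volume_arc_ne_top τ c) (volume_arc_ne_top τ a)
    _ ≤ volume.real (arc τ c ∆ arc τ a) +
          (volume.real (arc τ a ∆ Icc 0 b) + volume.real (Icc 0 b ∆ Icc 0 d)) := by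
        gcongr
        exact measureReal_symmDiff_le _ (volume_arc_ne_top τ a) measure_Icc_lt_top.ne
    _ = volume.real (arc τ a ∆ Icc 0 b) + |c - a| + |b - d| := by
        rw [harc_symmDiff, hIcc_symmDiff]
        ring

lemma abs_sub_le_phi (hτ : τ ∈ Icc 0 1) {x y : ℝ} (hx : x ∈ Icc 0 1) (hy : y ∈ Icc 0 1) :
    |x - y| ≤ phi τ x y := by
  have h := abs_measureReal_sub_le_measureReal_symmDiff'
    (measurableSet_arc τ x).nullMeasurableSet
    (measurableSet_Icc (a := 0) (b := y)).nullMeasurableSet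
    (volume_arc_ne_top τ x) measure_Icc_lt_top.ne
  rwa [volume_real_arc hτ hx, Real.volume_real_Icc_of_le hy.1, sub_zero,
    ← phi_eq_volume_real_symmDiff_arc hy.2] at h

lemma phi_self (hτ : τ ∈ Icc 0 1) {s : ℝ} (hs : s ∈ Icc (min τ (1 - τ)) (max τ (1 - τ))) :
    phi τ s s = 2 * min τ (1 - τ) := by
  have hs01 : s ∈ Icc 0 1 :=
    Icc_subset_Icc (le_min hτ.1 (by linarith [hτ.2])) (max_le hτ.2 (by linarith [hτ.1])) hs
  rw [phi_eq_volume_real_symmDiff_arc hs01.2,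
    measureReal_symmDiff_eq_sub (measurableSet_arc τ s) measurableSet_Icc
      (volume_arc_ne_top τ s) measure_Icc_lt_top.ne,
    volume_real_arc hτ hs01, volume_real_arc_inter_Icc hτ hs01.2 hs01.2,
    Real.volume_real_Icc_of_le hs01.1]
  simp only [mem_Icc] at hτ hs
  grind

end BoundaryTerm

section LowerBound

open scoped Topology

variable {L : ℝ} {v : ℝ → ℝ}

/-- The part of `(0, L)` where `v` takes neither of the pure values `0` and `1`. Twice its measure
is the first term of `Fvol`. -/
def transitionSet (L : ℝ) (v : ℝ → ℝ) : Set ℝ :=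
  {x ∈ Ioo 0 L | 0 < v x ∧ v x < 1}

lemma Fvol_eq (L : ℝ) (v : ℝ → ℝ) :
    Fvol L v = 2 * volume.real (transitionSet L v) + (eVariationOn v (Ioo 0 L)).toReal :=
  rfl

lemma transitionSet_subset (L : ℝ) (v : ℝ → ℝ) : transitionSet L v ⊆ Ioo 0 L :=
  sep_subset _ _

lemma transitionSet_eq_Ioo (h : ∀ x ∈ Ioo 0 L, v x ∈ Ioo 0 1) : transitionSet L v = Ioo 0 L :=
  sep_eq_self_iff_mem_true.2 h

lemma transitionSet_one_sub (L : ℝ) (v : ℝ → ℝ) :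
    transitionSet L (fun x ↦ 1 - v x) = transitionSet L v := by
  simp only [transitionSet, sub_pos, sub_lt_self_iff, and_comm]

lemma exists_le_volume_real_transitionSet_add {c : ℝ} (hv : ∀ x ∈ Ioo 0 L, v x ∈ Ico 0 1)
    (hc : 0 < c) (hcv : c ^ 2 ≤ 4 * ∫ x in Ioo 0 L, v x) :
    ∃ x ∈ Ioo 0 L, c ≤ volume.real (transitionSet L v) + v x := by
  have hzero : ∀ x ∈ Ioo 0 L \ transitionSet L v, v x = 0 := fun x ⟨hx, hxT⟩ ↦
    ((hv x hx).1.eq_of_not_lt fun hpos ↦ hxT ⟨hx, hpos, (hv x hx).2⟩).symm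
  rw [setIntegral_eq_of_subset_of_forall_sdiff_eq_zero measurableSet_Ioo
    (transitionSet_subset L v) hzero] at hcv
  obtain ⟨x, hx, hle⟩ := exists_le_measureReal_add_of_sq_le_setIntegral
    (measure_ne_top_of_subset (transitionSet_subset L v) measure_Ioo_lt_top.ne) hc hcv
  exact ⟨x, transitionSet_subset L v hx, hle⟩

variable {τ σ a b : ℝ}

lemma le_of_add_sq_le_four_mul {t : ℝ} (hL : 0 < L) (h : (L + t) ^ 2 ≤ 4 * (σ * L)) : t ≤ σ :=
  le_of_mul_le_mul_right (by linarith [four_mul_le_sq_add L t]) hL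

lemma mem_Icc_min_max_of_add_sq_le_four_mul (hL : 0 < L)
    (hσ0 : (L + min τ (1 - τ)) ^ 2 ≤ 4 * (σ * L))
    (hσ1 : (L + min τ (1 - τ)) ^ 2 ≤ 4 * ((1 - σ) * L)) :
    σ ∈ Icc (min τ (1 - τ)) (max τ (1 - τ)) :=
  ⟨le_of_add_sq_le_four_mul hL hσ0,
    by linarith [le_of_add_sq_le_four_mul hL hσ1, min_add_max τ (1 - τ)]⟩

namespace Adm

lemma integrableOn (hv : Adm L σ v) : IntegrableOn v (Ioo 0 L) :=
  IntegrableOn.of_bound measure_Ioo_lt_top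
    (aemeasurable_restrict_of_locallyBoundedVariationOn measurableSet_Ioo
      hv.2.1.locallyBoundedVariationOn).aestronglyMeasurable 1
    (ae_restrict_of_forall_mem measurableSet_Ioo fun x hx ↦
      abs_le.2 ⟨by linarith [(hv.1 x hx).1], (hv.1 x hx).2⟩)

lemma setAverage_eq (hv : Adm L σ v) (hL : 0 < L) : ⨍ x in Ioo 0 L, v x = σ := by
  rw [MeasureTheory.setAverage_eq, hv.2.2, Real.volume_real_Ioo_of_le hL.le, sub_zero, smul_eq_mul]
  field_simp

lemma integral_one_sub (hv : Adm L σ v) (hL : 0 ≤ L) :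
    ∫ x in Ioo 0 L, (1 - v x) = (1 - σ) * L := by
  rw [integral_sub (integrable_const 1) hv.integrableOn, hv.2.2,
    setIntegral_const, Real.volume_real_Ioo_of_le hL, smul_eq_mul]
  ring

lemma exists_mem_uIcc (hv : Adm L σ v) (hL : 0 < L) :
    ∃ x ∈ Ioo 0 L, ∃ y ∈ Ioo 0 L, σ ∈ uIcc (v x) (v y) := by
  have hvol : volume (Ioo 0 L) ≠ 0 := by simpa using hL
  obtain ⟨x, hx, hxσ⟩ := exists_le_setAverage hvol measure_Ioo_lt_top.ne hv.integrableOn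
  obtain ⟨y, hy, hyσ⟩ := exists_setAverage_le hvol measure_Ioo_lt_top.ne hv.integrableOn
  rw [hv.setAverage_eq hL] at hxσ hyσ
  exact ⟨x, hx, y, hy, Icc_subset_uIcc ⟨hxσ, hyσ⟩⟩

lemma abs_sub_add_phi_le (hv : Adm L σ v) (hτ : τ ∈ Icc 0 1)
    (ha : Tendsto v (𝓝[Ioo 0 L] 0) (𝓝 a)) (hb : Tendsto v (𝓝[Ioo 0 L] L) (𝓝 b))
    {x y : ℝ} (hx : x ∈ Ioo 0 L) (hy : y ∈ Ioo 0 L) (hxy : x ≤ y) :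
    |v x - v y| + phi τ (v x) (v y) ≤ (eVariationOn v (Ioo 0 L)).toReal + phi τ a b := by
  have hL : 0 < L := hx.1.trans hx.2
  have := left_nhdsWithin_Ioo_neBot hL
  have := right_nhdsWithin_Ioo_neBot hL
  have ha01 : a ∈ Icc 0 1 := isClosed_Icc.mem_of_tendsto ha (eventually_nhdsWithin_of_forall hv.1)
  have hb01 : b ∈ Icc 0 1 := isClosed_Icc.mem_of_tendsto hb (eventually_nhdsWithin_of_forall hv.1)
  have hvar := dist_add_dist_add_dist_le_eVariationOn_Ioo hv.2.1 ha hb hx hy hxy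
  have hphi := phi_le_phi_add hτ ha01 hb01 (hv.1 x hx) (hv.1 y hy)
  rw [Real.dist_eq, Real.dist_eq, Real.dist_eq] at hvar
  rw [abs_sub_comm (v x) a, abs_sub_comm b] at hphi
  linarith

lemma two_mul_abs_sub_le (hv : Adm L σ v) (hτ : τ ∈ Icc 0 1)
    (ha : Tendsto v (𝓝[Ioo 0 L] 0) (𝓝 a)) (hb : Tendsto v (𝓝[Ioo 0 L] L) (𝓝 b))
    {x y : ℝ} (hx : x ∈ Ioo 0 L) (hy : y ∈ Ioo 0 L) :
    2 * |v x - v y| ≤ (eVariationOn v (Ioo 0 L)).toReal + phi τ a b := by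
  wlog hxy : x ≤ y generalizing x y
  · rw [abs_sub_comm]
    exact this hy hx (le_of_not_ge hxy)
  linarith [hv.abs_sub_add_phi_le hτ ha hb hx hy hxy,
    abs_sub_le_phi hτ (hv.1 x hx) (hv.1 y hy)]

lemma two_mul_min_le (hv : Adm L σ v) (hτ : τ ∈ Icc 0 1)
    (ha : Tendsto v (𝓝[Ioo 0 L] 0) (𝓝 a)) (hb : Tendsto v (𝓝[Ioo 0 L] L) (𝓝 b))
    {x y s : ℝ} (hx : x ∈ Ioo 0 L) (hy : y ∈ Ioo 0 L) (hs : s ∈ uIcc (v x) (v y))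
    (hsτ : s ∈ Icc (min τ (1 - τ)) (max τ (1 - τ))) :
    2 * min τ (1 - τ) ≤ (eVariationOn v (Ioo 0 L)).toReal + phi τ a b := by
  wlog hxy : x ≤ y generalizing x y
  · exact this hy hx (uIcc_comm (v x) (v y) ▸ hs) (le_of_not_ge hxy)
  have hs01 : s ∈ Icc 0 1 := uIcc_subset_Icc (hv.1 x hx) (hv.1 y hy) hs
  have hsplit : |s - v x| + |v y - s| = |v x - v y| := by
    rcases mem_uIcc.1 hs with h | h <;> grind
  calc 2 * min τ (1 - τ) = phi τ s s := (phi_self hτ hsτ).symm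
    _ ≤ phi τ (v x) (v y) + |s - v x| + |v y - s| :=
        phi_le_phi_add hτ (hv.1 x hx) (hv.1 y hy) hs01 hs01
    _ = |v x - v y| + phi τ (v x) (v y) := by rw [← hsplit]; ring
    _ ≤ (eVariationOn v (Ioo 0 L)).toReal + phi τ a b := hv.abs_sub_add_phi_le hτ ha hb hx hy hxy

lemma two_mul_add_le_Fvol_add_phi (hv : Adm L σ v) (hτ : τ ∈ Icc 0 1) (hL0 : 0 < L)
    (hL : L ≤ max τ (1 - τ)) (hσ0 : (L + min τ (1 - τ)) ^ 2 ≤ 4 * (σ * L))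
    (hσ1 : (L + min τ (1 - τ)) ^ 2 ≤ 4 * ((1 - σ) * L))
    (ha : Tendsto v (𝓝[Ioo 0 L] 0) (𝓝 a)) (hb : Tendsto v (𝓝[Ioo 0 L] L) (𝓝 b)) :
    2 * L + 2 * min τ (1 - τ) ≤ Fvol L v + phi τ a b := by
  have hpos : 0 < L + min τ (1 - τ) := by
    have : 0 ≤ min τ (1 - τ) := le_min hτ.1 (sub_nonneg.2 hτ.2)
    positivity
  have hosc {x y : ℝ} (hx : x ∈ Ioo 0 L) (hy : y ∈ Ioo 0 L) := hv.two_mul_abs_sub_le hτ ha hb hx hy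
  rw [Fvol_eq]
  by_cases hone : ∀ y ∈ Ioo 0 L, v y < 1 <;> by_cases hzero : ∀ x ∈ Ioo 0 L, 0 < v x
  · obtain ⟨x, hx, y, hy, hσxy⟩ := hv.exists_mem_uIcc hL0
    rw [transitionSet_eq_Ioo fun z hz ↦ ⟨hzero z hz, hone z hz⟩, Real.volume_real_Ioo_of_le hL0.le]
    linarith [hv.two_mul_min_le hτ ha hb hx hy hσxy
      (mem_Icc_min_max_of_add_sq_le_four_mul hL0 hσ0 hσ1)]
  · push Not at hzero
    obtain ⟨x, hx, hvx⟩ := hzero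
    obtain ⟨y, hy, hle⟩ := exists_le_volume_real_transitionSet_add
      (fun z hz ↦ ⟨(hv.1 z hz).1, hone z hz⟩) hpos (hv.2.2.symm ▸ hσ0)
    linarith [hosc hy hx, le_abs_self (v y - v x)]
  · push Not at hone
    obtain ⟨y, hy, hvy⟩ := hone
    obtain ⟨x, hx, hle⟩ := exists_le_volume_real_transitionSet_add (v := fun z ↦ 1 - v z)
      (fun z hz ↦ ⟨sub_nonneg.2 (hv.1 z hz).2, sub_lt_self _ (hzero z hz)⟩) hpos
      ((hv.integral_one_sub hL0.le).symm ▸ hσ1)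
    rw [transitionSet_one_sub] at hle
    linarith [hosc hy hx, le_abs_self (v y - v x)]
  · push Not at hone hzero
    obtain ⟨⟨y, hy, hvy⟩, x, hx, hvx⟩ := And.intro hone hzero
    linarith [hosc hy hx, le_abs_self (v y - v x), min_add_max τ (1 - τ),
      measureReal_nonneg (μ := volume) (s := transitionSet L v)]

end Adm

end LowerBound

lemma adm_const {L σ : ℝ} (hL : 0 ≤ L) (hσ : σ ∈ Icc 0 1) : Adm L σ (fun _ ↦ σ) := by
  refine ⟨fun _ _ ↦ hσ, ?_, ?_⟩
  · simp [BoundedVariationOn, eVariationOn_const]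
  · rw [setIntegral_const, Real.volume_real_Ioo_of_le hL, sub_zero, smul_eq_mul, mul_comm]

lemma Fvol_const {L σ : ℝ} (hL : 0 ≤ L) (hσ : σ ∈ Ioo 0 1) : Fvol L (fun _ ↦ σ) = 2 * L := by
  rw [Fvol_eq, transitionSet_eq_Ioo fun _ _ ↦ hσ, eVariationOn_const,
    Real.volume_real_Ioo_of_le hL, sub_zero, ENNReal.toReal_zero, add_zero]

theorem periodic_min_intermediate_domain_general (τ σ L : ℝ)
    (hτ : τ ∈ Icc (0 : ℝ) 1) (hL0 : 0 < L) (hL : L ≤ max τ (1 - τ))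
    (hσ1 : (L + min τ (1 - τ)) ^ 2 / (4 * L) ≤ σ)
    (hσ2 : σ ≤ 1 - (L + min τ (1 - τ)) ^ 2 / (4 * L)) :
    (∀ v : ℝ → ℝ, ∀ a b : ℝ, Adm L σ v →
        Tendsto v (nhdsWithin 0 (Ioo 0 L)) (nhds a) →
        Tendsto v (nhdsWithin L (Ioo 0 L)) (nhds b) →
        2 * L + 2 * min τ (1 - τ) ≤ Fvol L v + phi τ a b) ∧
    (Adm L σ (fun _ => σ) ∧
      Fvol L (fun _ => σ) + phi τ σ σ = 2 * L + 2 * min τ (1 - τ)) := by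
  have hmin : 0 ≤ min τ (1 - τ) := le_min hτ.1 (sub_nonneg.2 hτ.2)
  have hpos : 0 < (L + min τ (1 - τ)) ^ 2 / (4 * L) := by positivity
  have hσ01 : σ ∈ Ioo 0 1 := ⟨hpos.trans_le hσ1, by linarith⟩
  have hsq0 : (L + min τ (1 - τ)) ^ 2 ≤ 4 * (σ * L) := by
    linarith [(div_le_iff₀ (by positivity)).1 hσ1]
  have hsq1 : (L + min τ (1 - τ)) ^ 2 ≤ 4 * ((1 - σ) * L) := by
    linarith [(div_le_iff₀ (by positivity)).1 (le_sub_comm.1 hσ2)]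
  refine ⟨fun v a b hv ha hb ↦ ?_, adm_const hL0.le (Ioo_subset_Icc_self hσ01), ?_⟩
  · exact hv.two_mul_add_le_Fvol_add_phi hτ hL0 hL hsq0 hsq1 ha hb
  · rw [Fvol_const hL0.le hσ01,
      phi_self hτ (mem_Icc_min_max_of_add_sq_le_four_mul hL0 hsq0 hsq1)]

/-- Periodic minimum problem in intermediate-size domains with intermediate volume fraction:
writing `τ_* = min{τ,1−τ}` and `τ^* = max{τ,1−τ}`, for `τ_* ≤ L ≤ τ^*` and
`(L+τ_*)²/(4L) ≤ σ ≤ 1 − (L+τ_*)²/(4L)` the least value of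
`E^#_τ(v) = Fvol L v + φ_τ(v(0⁺), v(L⁻))` over `Adm(L,σ)` is `2L + 2τ_*`, attained by
the constant function `v ≡ σ`. -/
theorem periodic_min_intermediate_domain (τ σ L : ℝ)
    (hτ : τ ∈ Set.Icc (0 : ℝ) 1) (hL0 : 0 < L)
    (hL1 : min τ (1 - τ) ≤ L) (hL2 : L ≤ max τ (1 - τ))
    (hσ1 : (L + min τ (1 - τ)) ^ 2 / (4 * L) ≤ σ)
    (hσ2 : σ ≤ 1 - (L + min τ (1 - τ)) ^ 2 / (4 * L)) :
    (∀ v : ℝ → ℝ, ∀ a b : ℝ, Adm L σ v →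
        Tendsto v (nhdsWithin 0 (Set.Ioo 0 L)) (nhds a) →
        Tendsto v (nhdsWithin L (Set.Ioo 0 L)) (nhds b) →
        2 * L + 2 * min τ (1 - τ) ≤ Fvol L v + phi τ a b) ∧
    (Adm L σ (fun _ => σ) ∧
      Fvol L (fun _ => σ) + phi τ σ σ = 2 * L + 2 * min τ (1 - τ)) := by
  exact periodic_min_intermediate_domain_general τ σ L hτ hL0 hL2 hσ1 hσ2
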